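/- arXiv:1107.4879 — 2 statements merged into one kernel-verified Lean document; each statement's English description precedes it below -/
import Mathlib

section
/- Every regular graph of positive degree has a subgraph that is simultaneously spanning and a maximum 2-edge-colorable subgraph. -/
/-!
By double counting and Hall's theorem, a regular graph of positive degree carries an injective
`σ : V → V` with `σ v` adjacent to `v`. More generally, let `σ v` be adjacent to `v` and suppose
that `σ` takes each value at most `k` times. Among the maximum `(k + 1)`-edge-colorable subgraphs,
let `H` contain the edge `x (σ x)` for as many vertices `x` as possible. Then `H` is spanning.

Indeed, suppose that `v` is isolated in `H`, and put `u = σ v`. By maximality, no color is missing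
at `u`, so `u` has at least `k + 1` neighbors in `H`. Excluding `σ u` and the at most `k - 1`
vertices other than `v` that `σ` sends to `u`, there remains a neighbor `b`. Recolor: give the edge
`uv` the color of `ub` and remove `ub`. The result is again maximum; it contains `v (σ v)` and has
lost no edge `x (σ x)`, since `b ≠ σ u` and `u ≠ σ b`. This contradicts the choice of `H`.
-/

open SimpleGraph

variable {V : Type*}

/-- A subgraph is spanning if every vertex of the host graph has a neighbor in it. -/
def SpanningSub {G : SimpleGraph V} (H : G.Subgraph) : Prop :=
  ∀ v : V, ∃ w : V, H.Adj v w

/-- A subgraph is `k`-edge-colorable if its edges can be properly colored with `k` colors,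
i.e. its edge set can be partitioned into `k` matchings. -/
def EdgeColorable {G : SimpleGraph V} (H : G.Subgraph) (k : ℕ) : Prop :=
  ∃ f : H.edgeSet → Fin k, ∀ e₁ e₂ : H.edgeSet, e₁ ≠ e₂ →
    (∃ v : V, v ∈ (e₁ : Sym2 V) ∧ v ∈ (e₂ : Sym2 V)) → f e₁ ≠ f e₂

/-- A maximum `k`-edge-colorable subgraph: `k`-edge-colorable with as many edges as possible. -/
def MaximumEdgeColorable {G : SimpleGraph V} (H : G.Subgraph) (k : ℕ) : Prop :=
  EdgeColorable H k ∧
    ∀ H' : G.Subgraph, EdgeColorable H' k → H'.edgeSet.ncard ≤ H.edgeSet.ncard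

/-- `sp G`: the least `k` such that `G` has a spanning `k`-edge-colorable subgraph. -/
noncomputable def sp (G : SimpleGraph V) : ℕ :=
  sInf {k | ∃ H : G.Subgraph, SpanningSub H ∧ EdgeColorable H k}

/-- Maximum degree. -/
noncomputable def maxDeg (G : SimpleGraph V) : ℕ :=
  sSup (Set.range fun v : V => (G.neighborSet v).ncard)

/-- Minimum degree. -/
noncomputable def minDeg (G : SimpleGraph V) : ℕ :=
  sInf (Set.range fun v : V => (G.neighborSet v).ncard)

/-- Matching number. -/
noncomputable def matchNum (G : SimpleGraph V) : ℕ :=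
  sSup {n | ∃ M : G.Subgraph, M.IsMatching ∧ M.edgeSet.ncard = n}

/-- `f` restricts to a proper edge coloring of the edge set `F`: at every vertex, distinct edges of
`F` have distinct colors. The coloring is a total function on `Sym2 V`, with irrelevant values
outside `F`, so that edges can be added, removed and recolored without changing its type. -/
def IsProperOn {α : Type*} (f : Sym2 V → α) (F : Set (Sym2 V)) : Prop :=
  ∀ w, Set.InjOn f {e ∈ F | w ∈ e}

section IsProperOn

variable {α : Type*} {f : Sym2 V → α} {F F' : Set (Sym2 V)}

lemma IsProperOn.mono (hf : IsProperOn f F) (h : F' ⊆ F) : IsProperOn f F' :=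
  fun w _ h₁ _ h₂ => hf w ⟨h h₁.1, h₁.2⟩ ⟨h h₂.1, h₂.2⟩

lemma IsProperOn.insert_update [DecidableEq V] (hf : IsProperOn f F) {u v : V}
    (hv : ∀ e ∈ F, v ∉ e) {c : α} (hc : ∀ e ∈ F, u ∈ e → f e ≠ c) :
    IsProperOn (Function.update f s(u, v) c) (insert s(u, v) F) := by
  have update_eq : ∀ e ∈ F, Function.update f s(u, v) c e = f e := fun e he =>
    Function.update_of_ne (fun h => hv e he (by simp [h])) _ _
  have color_ne : ∀ e ∈ F, ∀ w ∈ s(u, v), w ∈ e → f e ≠ c := by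
    intro e he w hw hwe
    rcases Sym2.mem_iff.1 hw with rfl | rfl
    · exact hc e he hwe
    · exact absurd hwe (hv e he)
  rintro w e₁ ⟨rfl | h₁, hw₁⟩ e₂ ⟨rfl | h₂, hw₂⟩ heq
  · rfl
  · rw [Function.update_self, update_eq e₂ h₂] at heq
    exact absurd heq.symm (color_ne e₂ h₂ w hw₁ hw₂)
  · rw [Function.update_self, update_eq e₁ h₁] at heq
    exact absurd heq (color_ne e₁ h₁ w hw₂ hw₁)
  · rw [update_eq e₁ h₁, update_eq e₂ h₂] at heq
    exact hf w ⟨h₁, hw₁⟩ ⟨h₂, hw₂⟩ heq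

end IsProperOn

section Subgraph

variable {G : SimpleGraph V} {H H' : G.Subgraph} {k : ℕ} {u v b : V}

lemma exists_subgraph_edgeSet_eq {F : Set (Sym2 V)} (hF : F ⊆ G.edgeSet) :
    ∃ H : G.Subgraph, H.edgeSet = F := by
  refine ⟨{ verts := Set.univ
            Adj := fun a b => s(a, b) ∈ F
            adj_sub := fun h => hF h
            edge_vert := fun _ => Set.mem_univ _
            symm := ⟨fun a b h => by rwa [Sym2.eq_swap]⟩ }, ?_⟩
  ext ⟨a, b⟩
  rfl

lemma notMem_of_mem_edgeSet_of_notMem_support (hv : v ∉ H.support) :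
    ∀ e ∈ H.edgeSet, v ∉ e := by
  rintro _ he ⟨w, rfl⟩
  exact hv ⟨w, he⟩

lemma IsProperOn.edgeColorable {f : Sym2 V → Fin k} (hf : IsProperOn f H.edgeSet) :
    EdgeColorable H k :=
  ⟨fun e => f e, fun e₁ e₂ hne ⟨v, hv₁, hv₂⟩ heq =>
    hne (Subtype.ext (hf v ⟨e₁.2, hv₁⟩ ⟨e₂.2, hv₂⟩ heq))⟩

lemma EdgeColorable.exists_isProperOn [NeZero k] (hH : EdgeColorable H k) :
    ∃ f : Sym2 V → Fin k, IsProperOn f H.edgeSet := by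
  classical
  obtain ⟨g, hg⟩ := hH
  refine ⟨fun e => if h : e ∈ H.edgeSet then g ⟨e, h⟩ else 0, ?_⟩
  rintro v e₁ ⟨h₁, hv₁⟩ e₂ ⟨h₂, hv₂⟩ heq
  simp only [h₁, h₂, dif_pos] at heq
  by_contra hne
  exact hg _ _ (fun h => hne (congrArg Subtype.val h)) ⟨v, hv₁, hv₂⟩ heq

lemma IsProperOn.exists_edgeColorable_insert {F : Set (Sym2 V)} {f : Sym2 V → Fin k}
    (hf : IsProperOn f F) (hF : F ⊆ G.edgeSet) (huv : G.Adj u v) (hv : ∀ e ∈ F, v ∉ e) {c : Fin k}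
    (hc : ∀ e ∈ F, u ∈ e → f e ≠ c) :
    ∃ H : G.Subgraph, EdgeColorable H k ∧ H.edgeSet = insert s(u, v) F := by
  classical
  obtain ⟨H, hH⟩ := exists_subgraph_edgeSet_eq (Set.insert_subset (G.mem_edgeSet.2 huv) hF)
  refine ⟨H, IsProperOn.edgeColorable (f := Function.update f s(u, v) c) ?_, hH⟩
  rw [hH]
  exact hf.insert_update hv hc

lemma exists_maximumEdgeColorable [Finite V] (G : SimpleGraph V) (k : ℕ) :
    ∃ H : G.Subgraph, MaximumEdgeColorable H k := by
  have bot_colorable : EdgeColorable (⊥ : G.Subgraph) k :=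
    ⟨fun e => absurd e.2 (by simp), fun e => absurd e.2 (by simp)⟩
  exact Set.exists_max_image {H : G.Subgraph | EdgeColorable H k} (fun H => H.edgeSet.ncard)
    (Set.toFinite _) ⟨⊥, bot_colorable⟩

/-- If a color were missing at `u`, the edge `uv` could be added with that color. -/
lemma MaximumEdgeColorable.le_ncard_neighborSet [Finite V] (hH : MaximumEdgeColorable H k)
    (huv : G.Adj u v) (hv : v ∉ H.support) : k ≤ (H.neighborSet u).ncard := by
  by_contra! hlt
  have : NeZero k := ⟨by lia⟩
  obtain ⟨f, hf⟩ := hH.1.exists_isProperOn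
  obtain ⟨c, hc⟩ : ∃ c, c ∉ (fun w => f s(u, w)) '' H.neighborSet u := by
    by_contra! all_used
    have himage := Set.ncard_image_le (f := fun w => f s(u, w)) (s := H.neighborSet u)
    rw [Set.eq_univ_of_forall all_used, Set.ncard_univ, Nat.card_fin] at himage
    lia
  have hmissing : ∀ e ∈ H.edgeSet, u ∈ e → f e ≠ c := by
    rintro _ he ⟨w, rfl⟩ rfl
    exact hc ⟨w, he, rfl⟩
  have hv_edges := notMem_of_mem_edgeSet_of_notMem_support hv
  obtain ⟨H', hH', hedges⟩ :=
    hf.exists_edgeColorable_insert H.edgeSet_subset huv hv_edges hmissing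
  have hle := hH.2 H' hH'
  rw [hedges, Set.ncard_insert_of_notMem fun h => hv_edges _ h (Sym2.mem_mk_right u v)] at hle
  lia

lemma MaximumEdgeColorable.exchange (hH : MaximumEdgeColorable H k) (huv : G.Adj u v)
    (hv : v ∉ H.support) (hub : H.Adj u b) :
    ∃ H' : G.Subgraph, MaximumEdgeColorable H' k ∧
      H'.edgeSet = insert s(u, v) (H.edgeSet \ {s(u, b)}) := by
  have : NeZero k := hH.1.elim fun g _ => ⟨(g ⟨s(u, b), hub⟩).pos.ne'⟩
  obtain ⟨f, hf⟩ := hH.1.exists_isProperOn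
  have hv_edges := notMem_of_mem_edgeSet_of_notMem_support hv
  have hfree : ∀ e ∈ H.edgeSet \ {s(u, b)}, u ∈ e → f e ≠ f s(u, b) := fun e he hue heq =>
    he.2 (hf u ⟨he.1, hue⟩ ⟨hub, Sym2.mem_mk_left u b⟩ heq)
  obtain ⟨H', hH', hedges⟩ := (hf.mono Set.sdiff_subset).exists_edgeColorable_insert
    (Set.sdiff_subset.trans H.edgeSet_subset) huv (fun e he => hv_edges e he.1) hfree
  have hcard : H'.edgeSet.ncard = H.edgeSet.ncard := by
    rw [hedges]
    exact Set.ncard_exchange (fun h => hv_edges _ h (Sym2.mem_mk_right u v)) hub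
  exact ⟨H', ⟨hH', fun K hK => hcard ▸ hH.2 K hK⟩, hedges⟩

lemma setOf_adj_ssubset_of_exchange {σ : V → V} (hv : v ∉ H.support) (hb : b ≠ σ (σ v))
    (hσb : σ b ≠ σ v) (hedges : H'.edgeSet = insert s(σ v, v) (H.edgeSet \ {s(σ v, b)})) :
    {x | H.Adj x (σ x)} ⊂ {x | H'.Adj x (σ x)} := by
  have hadj : ∀ x, H'.Adj x (σ x) ↔ s(x, σ x) ∈ insert s(σ v, v) (H.edgeSet \ {s(σ v, b)}) :=
    fun x => by rw [← hedges, Subgraph.mem_edgeSet]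
  have hsub : {x | H.Adj x (σ x)} ⊆ {x | H'.Adj x (σ x)} := by
    intro x hx
    refine (hadj x).2 (Or.inr ⟨hx, fun h => ?_⟩)
    rcases Sym2.eq_iff.1 h with ⟨hx₁, hx₂⟩ | ⟨hx₁, hx₂⟩
    · exact hb (hx₂.symm.trans (congrArg σ hx₁))
    · exact hσb (hx₁ ▸ hx₂)
  exact (Set.ssubset_iff_of_subset hsub).2
    ⟨v, (hadj v).2 (Or.inl Sym2.eq_swap), fun h => hv ⟨σ v, h⟩⟩

end Subgraph

lemma exists_injective_adj_of_isRegularOfDegree {G : SimpleGraph V} [G.LocallyFinite] {r : ℕ}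
    (hreg : G.IsRegularOfDegree r) (hr : 0 < r) :
    ∃ σ : V → V, Function.Injective σ ∧ ∀ v, G.Adj v (σ v) := by
  classical
  have hall : ∀ S : Finset V, S.card ≤ (S.biUnion fun v => G.neighborFinset v).card := by
    intro S
    refine Nat.le_of_mul_le_mul_right
      (Finset.card_mul_le_card_mul G.Adj (m := r) (n := r) (fun a ha => ?_) fun b _ => ?_) hr
    · rw [← hreg a, ← G.card_neighborFinset_eq_degree]
      refine Finset.card_le_card fun b hb => (Finset.mem_bipartiteAbove _).2 ?_
      exact ⟨Finset.mem_biUnion.2 ⟨a, ha, hb⟩, (G.mem_neighborFinset a b).1 hb⟩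
    · rw [← hreg b, ← G.card_neighborFinset_eq_degree]
      refine Finset.card_le_card fun a ha => (G.mem_neighborFinset b a).2 ?_
      exact ((Finset.mem_bipartiteBelow _).1 ha).2.symm
  simpa only [mem_neighborFinset] using
    (Finset.all_card_le_biUnion_card_iff_exists_injective fun v => G.neighborFinset v).1 hall

theorem regular_spanning_maximum_two_edge_colorable_general [Finite V] {G : SimpleGraph V}
    {k : ℕ} {σ : V → V} (hadj : ∀ v, G.Adj v (σ v)) (hσ : ∀ u, {x | σ x = u}.ncard ≤ k) :
    ∃ H : G.Subgraph, SpanningSub H ∧ MaximumEdgeColorable H (k + 1) := by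
  obtain ⟨H, hH, hbest⟩ := Set.exists_max_image {H : G.Subgraph | MaximumEdgeColorable H (k + 1)}
    (fun H => {x | H.Adj x (σ x)}.ncard) (Set.toFinite _) (exists_maximumEdgeColorable G (k + 1))
  refine ⟨H, fun v => ?_, hH⟩
  by_contra hv
  have hdeg : k + 1 ≤ (H.neighborSet (σ v)).ncard := hH.le_ncard_neighborSet (hadj v).symm hv
  obtain ⟨b, hub, hb⟩ : ∃ b ∈ H.neighborSet (σ v),
      b ∉ insert (σ (σ v)) ({x | σ x = σ v} \ {v}) := by
    refine Set.exists_mem_notMem_of_ncard_lt_ncard ((Set.ncard_insert_le _ _).trans_lt ?_)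
    rw [Set.ncard_sdiff_singleton_add_one (s := {x | σ x = σ v}) rfl]
    exact (hσ (σ v)).trans_lt hdeg
  have hbv : b ≠ v := fun h => hv ⟨σ v, h ▸ hub.symm⟩
  obtain ⟨H', hH', hedges⟩ := hH.exchange (hadj v).symm hv hub
  refine (hbest H' hH').not_gt (Set.ncard_lt_ncard (setOf_adj_ssubset_of_exchange hv ?_ ?_ hedges))
  · exact fun h => hb (Or.inl h)
  · exact fun h => hb (Or.inr ⟨h, hbv⟩)

/-- Every regular graph of positive degree has a subgraph that is simultaneously spanning
and a maximum 2-edge-colorable subgraph. -/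
theorem regular_spanning_maximum_two_edge_colorable {V : Type*} [Fintype V]
    (G : SimpleGraph V) [DecidableRel G.Adj] (r : ℕ) (hr : 0 < r) (hreg : G.IsRegularOfDegree r) :
    ∃ H : G.Subgraph, SpanningSub H ∧ MaximumEdgeColorable H 2 := by
  obtain ⟨σ, hσ, hadj⟩ := exists_injective_adj_of_isRegularOfDegree hreg hr
  exact regular_spanning_maximum_two_edge_colorable_general hadj fun u =>
    Set.ncard_le_one_iff_subsingleton.2 fun _ hx _ hy => hσ (hx.trans hy.symm)
end

section
/- For any graph G without isolated vertices, sp(G) ≤ Δ(G) − δ(G) + 2. -/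
/-!
If adjacent vertices have degrees within a factor `c` of each other, double counting the edges `v w`
with `v` in a finite set `S`, each weighted by `1 / deg v ≤ c / deg w`, gives `|S| ≤ c |N(S)|`. By
Hall's theorem every vertex `v` can then choose a neighbor `f v` so that no vertex is chosen more
than `c` times. The edges `v (f v)` form a spanning subgraph of maximum degree at most `c + 1`. A
minimal spanning subgraph of it, which exists by Zorn's lemma because degrees are finite, is a star
forest, whose edges can be colored star by star with `c + 1` colors. Finally `c = Δ - δ + 1` is
admissible, because `Δ ≤ (Δ - δ + 1) d` whenever `1 ≤ d` and `δ ≤ d`.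
-/

open SimpleGraph

variable {V : Type*}

section Choice

lemma exists_forall_mem_and_encard_preimage_le {ι α : Type*} [DecidableEq α] {t : ι → Finset α}
    {c : ℕ} (ht : ∀ S : Finset ι, S.card ≤ c * (S.biUnion t).card) :
    ∃ f : ι → α, (∀ i, f i ∈ t i) ∧ ∀ a, (f ⁻¹' {a}).encard ≤ c := by
  -- Hall's theorem for `c` copies of every element of `α`
  obtain ⟨φ, hφ, hmem⟩ := (Finset.all_card_le_biUnion_card_iff_exists_injective
    fun i => t i ×ˢ (Finset.univ : Finset (Fin c))).1 fun S => by
      have hcopies : S.biUnion (fun i => t i ×ˢ (Finset.univ : Finset (Fin c))) =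
          S.biUnion t ×ˢ Finset.univ := by
        ext ⟨a, j⟩
        simp
      rw [hcopies, Finset.card_product, Finset.card_fin, mul_comm]
      exact ht S
  refine ⟨fun i => (φ i).1, fun i => (Finset.mem_product.1 (hmem i)).1, fun a => ?_⟩
  have hcopy : Set.InjOn (fun i => (φ i).2) ((fun i => (φ i).1) ⁻¹' {a}) :=
    fun i hi j hj hij => hφ (Prod.ext (hi.trans hj.symm) hij)
  calc ((fun i => (φ i).1) ⁻¹' {a}).encard
      ≤ (Set.univ : Set (Fin c)).encard :=
        Set.encard_le_encard_of_injOn (Set.mapsTo_univ _ _) hcopy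
    _ = c := by simp

variable {G : SimpleGraph V} [G.LocallyFinite] {c : ℕ}

lemma card_le_mul_card_biUnion_neighborFinset [DecidableEq V]
    (hG : ∀ v, ∃ w, G.Adj v w) (hdeg : ∀ v w, G.Adj v w → G.degree w ≤ c * G.degree v)
    (S : Finset V) :
    S.card ≤ c * (S.biUnion fun v => G.neighborFinset v).card := by
  have hpos (v : V) : (0 : ℚ) < G.degree v := by
    exact_mod_cast (G.degree_pos_iff_exists_adj v).2 (hG v)
  have hinv (v w : V) (h : G.Adj v w) : (G.degree v : ℚ)⁻¹ ≤ c / G.degree w := by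
    rw [inv_le_iff_one_le_mul₀ (hpos v), div_mul_eq_mul_div, one_le_div (hpos w)]
    exact_mod_cast hdeg v w h
  suffices (S.card : ℚ) ≤ c * (S.biUnion fun v => G.neighborFinset v).card by exact_mod_cast this
  calc (S.card : ℚ)
      = ∑ v ∈ S, ∑ _w ∈ G.neighborFinset v, (G.degree v : ℚ)⁻¹ := by
        simp [mul_inv_cancel₀ (hpos _).ne']
    _ ≤ ∑ v ∈ S, ∑ w ∈ G.neighborFinset v, (c / G.degree w : ℚ) := by
        gcongr with v _ w hw
        exact hinv v w ((G.mem_neighborFinset v w).1 hw)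
    _ = ∑ w ∈ S.biUnion fun v => G.neighborFinset v,
          ∑ _v ∈ S ∩ G.neighborFinset w, (c / G.degree w : ℚ) :=
        Finset.sum_comm' fun v w => by
          simp only [Finset.mem_inter, Finset.mem_biUnion, mem_neighborFinset]
          exact ⟨fun ⟨hv, h⟩ => ⟨⟨hv, h.symm⟩, v, hv, h⟩, fun ⟨⟨hv, h⟩, _⟩ => ⟨hv, h.symm⟩⟩
    _ ≤ ∑ w ∈ S.biUnion fun v => G.neighborFinset v,
          ∑ _v ∈ G.neighborFinset w, (c / G.degree w : ℚ) := by
        gcongr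
        exact Finset.inter_subset_right
    _ = c * (S.biUnion fun v => G.neighborFinset v).card := by
        simp [mul_div_cancel₀ _ (hpos _).ne', mul_comm]

lemma exists_adj_choice_encard_preimage_le (hG : ∀ v, ∃ w, G.Adj v w)
    (hdeg : ∀ v w, G.Adj v w → G.degree w ≤ c * G.degree v) :
    ∃ f : V → V, (∀ v, G.Adj v (f v)) ∧ ∀ w, (f ⁻¹' {w}).encard ≤ c := by
  classical
  simpa only [mem_neighborFinset] using
    exists_forall_mem_and_encard_preimage_le (card_le_mul_card_biUnion_neighborFinset hG hdeg)

end Choice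

section FunctionalGraph

/-- The functional graph of `f`, recording the choice of one neighbor `f v` for each vertex `v`:
its edges join `v` to `f v`. It is undirected, and fixed points of `f` contribute no edge. -/
def functionalGraph (f : V → V) : SimpleGraph V :=
  SimpleGraph.fromRel fun v w => f v = w

lemma functionalGraph_le {G : SimpleGraph V} {f : V → V} (hf : ∀ v, G.Adj v (f v)) :
    functionalGraph f ≤ G := by
  rintro v w ⟨-, rfl | rfl⟩
  exacts [hf v, (hf w).symm]

lemma encard_neighborSet_functionalGraph_le (f : V → V) (v : V) :
    ((functionalGraph f).neighborSet v).encard ≤ (f ⁻¹' {v}).encard + 1 := by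
  have hsub : (functionalGraph f).neighborSet v ⊆ insert (f v) (f ⁻¹' {v}) := by
    rintro w ⟨-, h | h⟩
    exacts [Or.inl h.symm, Or.inr h]
  exact (Set.encard_le_encard hsub).trans (Set.encard_insert_le _ _)

end FunctionalGraph

section StarForest

/-- A star forest: every component is a star, possibly a single vertex. This is encoded edgewise,
as each edge having an endpoint (a leaf of its star) with no other neighbor. The edges
can then be colored independently around each center. -/
def IsStarForest (H : SimpleGraph V) : Prop :=
  ∀ ⦃u v⦄, H.Adj u v → (H.neighborSet u).Subsingleton ∨ (H.neighborSet v).Subsingleton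

lemma isStarForest_of_minimal {H : SimpleGraph V}
    (hH : Minimal (fun H : SimpleGraph V => ∀ v, ∃ w, H.Adj v w) H) : IsStarForest H := by
  intro u v huv
  by_contra! hcon
  obtain ⟨hu, hv⟩ := hcon
  obtain ⟨u', hu', hne_u⟩ := hu.exists_ne v
  obtain ⟨v', hv', hne_v⟩ := hv.exists_ne u
  have hspan (x : V) : ∃ w, (H.deleteEdges {s(u, v)}).Adj x w := by
    simp only [deleteEdges_adj, Set.mem_singleton_iff]
    obtain ⟨w, hw⟩ := hH.prop x
    by_cases hxu : x = u
    · exact ⟨u', hxu ▸ hu', by grind⟩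
    by_cases hxv : x = v
    · exact ⟨v', hxv ▸ hv', by grind⟩
    · exact ⟨w, hw, by grind⟩
  have hdel := hH.le_of_le hspan (deleteEdges_le _) huv
  simp at hdel

lemma exists_adj_sInf_of_isChain {C : Set (SimpleGraph V)} (hC : IsChain (· ≤ ·) C)
    (hne : C.Nonempty) {v : V} (hfin : ∀ H ∈ C, (H.neighborSet v).Finite)
    (hadj : ∀ H ∈ C, ∃ w, H.Adj v w) : ∃ w, (sInf C).Adj v w := by
  obtain ⟨H₀, hH₀, hmin⟩ := exists_minimalFor_of_wellFoundedLT (· ∈ C)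
    (fun H : SimpleGraph V => (H.neighborSet v).ncard) hne
  obtain ⟨w, hw⟩ := hadj H₀ hH₀
  refine ⟨w, (sInf_adj_of_nonempty hne).2 fun H hH => ?_⟩
  rcases hC.total hH₀ hH with hle | hle
  · exact hle hw
  have hsub : H.neighborSet v ⊆ H₀.neighborSet v := fun x hx => hle hx
  have hcard : (H₀.neighborSet v).ncard ≤ (H.neighborSet v).ncard :=
    hmin hH (Set.ncard_le_ncard hsub (hfin H₀ hH₀))
  have heq : H.neighborSet v = H₀.neighborSet v :=
    Set.eq_of_subset_of_ncard_le hsub hcard (hfin H₀ hH₀)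
  exact heq.ge hw

lemma exists_isStarForest_le {F : SimpleGraph V} (hfin : ∀ v, (F.neighborSet v).Finite)
    (hF : ∀ v, ∃ w, F.Adj v w) : ∃ H ≤ F, (∀ v, ∃ w, H.Adj v w) ∧ IsStarForest H := by
  let spanning : Set (SimpleGraph V) := {H | H ≤ F ∧ ∀ v, ∃ w, H.Adj v w}
  have hchain : ∀ C ⊆ spanning, IsChain (· ≤ ·) C → ∀ H₀ ∈ C, sInf C ∈ spanning := by
    intro C hCF hC H₀ hH₀
    refine ⟨(sInf_le hH₀).trans (hCF hH₀).1, fun v => ?_⟩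
    exact exists_adj_sInf_of_isChain hC ⟨H₀, hH₀⟩
      (fun _ hH => (hfin v).subset fun _ hw => (hCF hH).1 hw) fun _ hH => (hCF hH).2 v
  obtain ⟨H, -, hmin⟩ := zorn_le_nonempty₀ (α := (SimpleGraph V)ᵒᵈ) spanning
    (fun C hCF hC H₀ hH₀ => ⟨_, hchain C hCF hC.symm H₀ hH₀,
      fun K hK => sInf_le (α := SimpleGraph V) hK⟩) F ⟨le_rfl, hF⟩
  obtain ⟨hHF, hspan⟩ := hmin.prop
  have hmin' : Minimal (fun H : SimpleGraph V => ∀ v, ∃ w, H.Adj v w) H :=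
    ⟨hspan, fun K hK hKH => hmin.2 ⟨le_trans hKH hHF, hK⟩ hKH⟩
  exact ⟨H, hHF, hspan, isStarForest_of_minimal hmin'⟩

end StarForest

section Coloring

variable {G H : SimpleGraph V} {k : ℕ}

lemma IsStarForest.exists_dart_edge_eq (hH : IsStarForest H) {e : Sym2 V} (he : e ∈ H.edgeSet) :
    ∃ d : H.Dart, d.edge = e ∧ (H.neighborSet d.snd).Subsingleton := by
  induction e with
  | _ u v =>
    rcases hH he with hu | hv
    · exact ⟨⟨(v, u), (H.mem_edgeSet.1 he).symm⟩, Sym2.eq_swap, hu⟩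
    · exact ⟨⟨(u, v), he⟩, rfl, hv⟩

lemma eq_fst_of_mem_edge_of_subsingleton {d₁ d₂ : H.Dart}
    (hleaf : (H.neighborSet d₁.snd).Subsingleton) (hne : d₁.edge ≠ d₂.edge) {v : V}
    (h₁ : v ∈ d₁.edge) (h₂ : v ∈ d₂.edge) : v = d₁.fst := by
  refine (Sym2.mem_iff.1 h₁).resolve_right fun hv => hne ?_
  obtain ⟨w, hw⟩ := h₂
  have hvw : H.Adj d₁.snd w := by
    rw [← mem_edgeSet, ← hv, ← hw]
    exact d₂.edge_mem
  have hwfst : w = d₁.fst := hleaf hvw d₁.adj.symm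
  rw [hw, hwfst, hv]
  exact Sym2.eq_swap

lemma exists_dart_coloring (hk : ∀ v, (H.neighborSet v).encard ≤ k) :
    ∃ color : H.Dart → Fin k, ∀ d₁ d₂, d₁.fst = d₂.fst → color d₁ = color d₂ → d₁ = d₂ := by
  have hemb (v : V) : Nonempty (H.neighborSet v ↪ Fin k) := by
    obtain ⟨hfin, hcard⟩ := Set.encard_le_coe_iff_finite_ncard_le.1 (hk v)
    have := hfin.fintype
    exact Function.Embedding.nonempty_of_card_le (by
      rwa [Fintype.card_fin, ← Nat.card_eq_fintype_card])
  let color (d : H.Dart) : Fin k := (hemb d.fst).some ⟨d.snd, d.adj⟩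
  refine ⟨color, ?_⟩
  rintro ⟨⟨u, v₁⟩, h₁⟩ ⟨⟨_, v₂⟩, h₂⟩ rfl hcolor
  obtain rfl : v₁ = v₂ := congrArg Subtype.val ((hemb u).some.injective hcolor)
  rfl

lemma IsStarForest.edgeColorable_toSubgraph (hH : IsStarForest H) (hHG : H ≤ G)
    (hk : ∀ v, (H.neighborSet v).encard ≤ k) : EdgeColorable (toSubgraph H hHG) k := by
  obtain ⟨color, hcolor⟩ := exists_dart_coloring hk
  choose d hedge hleaf using fun e : (toSubgraph H hHG).edgeSet => hH.exists_dart_edge_eq e.2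
  refine ⟨fun e => color (d e), ?_⟩
  rintro e₁ e₂ hne ⟨v, hv₁, hv₂⟩ heq
  have hedge_ne : (d e₁).edge ≠ (d e₂).edge := by
    rwa [hedge, hedge, Subtype.coe_ne_coe]
  rw [← hedge] at hv₁ hv₂
  have hcenter₁ : v = (d e₁).fst :=
    eq_fst_of_mem_edge_of_subsingleton (hleaf e₁) hedge_ne hv₁ hv₂
  have hcenter₂ : v = (d e₂).fst :=
    eq_fst_of_mem_edge_of_subsingleton (hleaf e₂) hedge_ne.symm hv₂ hv₁
  exact hedge_ne (congrArg Dart.edge (hcolor _ _ (hcenter₁.symm.trans hcenter₂) heq))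

end Coloring

theorem sp_le_add_one_of_degree_le_mul {G : SimpleGraph V} [G.LocallyFinite] {c : ℕ}
    (hG : ∀ v, ∃ w, G.Adj v w) (hdeg : ∀ v w, G.Adj v w → G.degree w ≤ c * G.degree v) :
    sp G ≤ c + 1 := by
  obtain ⟨f, hf, hfiber⟩ := exists_adj_choice_encard_preimage_le hG hdeg
  have hcard (v : V) : ((functionalGraph f).neighborSet v).encard ≤ (c + 1 : ℕ) := by
    grw [encard_neighborSet_functionalGraph_le, hfiber, Nat.cast_add_one]
  obtain ⟨H, hHf, hspan, hstar⟩ := exists_isStarForest_le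
    (fun v => Set.finite_of_encard_le_coe (hcard v)) fun v => ⟨f v, (hf v).ne, Or.inl rfl⟩
  have hHcard (v : V) : (H.neighborSet v).encard ≤ (c + 1 : ℕ) :=
    (Set.encard_le_encard fun _ hw => hHf hw).trans (hcard v)
  exact Nat.sInf_le ⟨toSubgraph H (hHf.trans (functionalGraph_le hf)), hspan,
    hstar.edgeColorable_toSubgraph _ hHcard⟩

section Degree

variable (G : SimpleGraph V) [G.LocallyFinite]

lemma ncard_neighborSet_eq_degree (v : V) : (G.neighborSet v).ncard = G.degree v := by
  rw [← Nat.card_coe_set_eq, Nat.card_eq_fintype_card, card_neighborSet_eq_degree]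

lemma minDeg_le_degree (v : V) : minDeg G ≤ G.degree v :=
  Nat.sInf_le ⟨v, ncard_neighborSet_eq_degree G v⟩

variable {G}

lemma degree_le_maxDeg (hbdd : BddAbove (Set.range fun v => G.degree v)) (v : V) :
    G.degree v ≤ maxDeg G := by
  simp only [maxDeg, ncard_neighborSet_eq_degree]
  exact le_csSup hbdd ⟨v, rfl⟩

end Degree

theorem sp_le_maxDeg_sub_minDeg_add_two_general (G : SimpleGraph V) [G.LocallyFinite]
    (hbdd : BddAbove (Set.range fun v => G.degree v)) (hG : ∀ v, ∃ w, G.Adj v w) :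
    sp G ≤ maxDeg G - minDeg G + 2 := by
  refine sp_le_add_one_of_degree_le_mul hG fun v w _ => ?_
  have hpos : 1 ≤ G.degree v := (G.degree_pos_iff_exists_adj v).2 (hG v)
  calc G.degree w
      ≤ maxDeg G := degree_le_maxDeg hbdd w
    _ ≤ (maxDeg G - minDeg G) + minDeg G := le_tsub_add
    _ ≤ (maxDeg G - minDeg G) * G.degree v + G.degree v :=
        Nat.add_le_add (Nat.le_mul_of_pos_right _ hpos) (minDeg_le_degree G v)
    _ = (maxDeg G - minDeg G + 1) * G.degree v := by ring

/-- For any graph without isolated vertices, `sp(G) ≤ Δ(G) - δ(G) + 2`. -/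
theorem sp_le_maxDeg_sub_minDeg_add_two {V : Type*} [Fintype V] (G : SimpleGraph V)
    (hG : ∀ v : V, ∃ w : V, G.Adj v w) :
    sp G ≤ maxDeg G - minDeg G + 2 := by
  classical
  exact sp_le_maxDeg_sub_minDeg_add_two_general G (Set.finite_range _).bddAbove hG
end
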